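/- Let δ ∈ ℤ, m := ⌊δ/2⌋, and set T := m − 1 if δ is even and T := m if δ is odd. Let λ be a partition and let (i,j) satisfy 1 ≤ j < i and λ^T_i + λ^T_j − i − j + 2 = δ; put n := e_δ(λ)_j (a vertex of L labelled × in x_λ). Then (i,j) belongs to the Young diagram [λ] (equivalently i ≤ λ^T_j) if and only if #{n' ∈ L : n' < n and n' is labelled × in x_λ} − #{n' ∈ L : n' < n and n' is labelled ∘ in x_λ} < T. -/

import Mathlib

open Polynomial

/-- A partition: a weakly decreasing, finitely supported sequence of naturals λ_1, λ_2, …. -/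
structure Ptn where
  toFun : ℕ+ → ℕ
  antitone' : ∀ i j : ℕ+, i ≤ j → toFun j ≤ toFun i
  finite_support' : ∃ N : ℕ+, ∀ i : ℕ+, N ≤ i → toFun i = 0

namespace Ptn

/-- The transpose partition: λ^T_i = #{k ≥ 1 : λ_k ≥ i}. -/
noncomputable def transpose (p : Ptn) (i : ℕ+) : ℕ :=
  Set.ncard {k : ℕ+ | (i : ℕ) ≤ p.toFun k}

/-- The empty partition. -/
def empty : Ptn where
  toFun := fun _ => 0
  antitone' := fun _ _ _ => le_refl 0
  finite_support' := ⟨1, fun _ _ => rfl⟩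

end Ptn

/-- e_δ(λ)_i = λ^T_i − δ/2 − i + 1. -/
noncomputable def ed (δ : ℤ) (p : Ptn) (i : ℕ+) : ℚ :=
  (p.transpose i : ℚ) - (δ : ℚ) / 2 - ((i : ℕ) : ℚ) + 1

/-- The δ-degree of singularity: #{(i,j) : 1 ≤ i < j, e_δ(λ)_i + e_δ(λ)_j = 0}. -/
noncomputable def degd (δ : ℤ) (p : Ptn) : ℕ :=
  Set.ncard {q : ℕ+ × ℕ+ | q.1 < q.2 ∧ ed δ p q.1 + ed δ p q.2 = 0}

/-- The vertex set L: nonnegative integers if δ is even, {1/2, 3/2, …} if δ is odd. -/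
def Lset (δ : ℤ) : Set ℚ :=
  {n : ℚ | 0 ≤ n ∧ ∃ k : ℤ, n + (δ : ℚ) / 2 = (k : ℚ)}

/-- Vertex n is labelled ∘ in x_λ: no entry of e_δ(λ) has absolute value n. -/
def IsCirc (δ : ℤ) (p : Ptn) (n : ℚ) : Prop := ∀ i : ℕ+, |ed δ p i| ≠ n

/-- Vertex n is labelled × in x_λ: n > 0 and both n and −n occur as entries. -/
def IsTimes (δ : ℤ) (p : Ptn) (n : ℚ) : Prop :=
  0 < n ∧ (∃ i : ℕ+, ed δ p i = n) ∧ (∃ i : ℕ+, ed δ p i = -n)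

/-- Vertex n is labelled ∧ in x_λ: n > 0, n occurs as an entry and −n does not. -/
def IsUp (δ : ℤ) (p : Ptn) (n : ℚ) : Prop :=
  0 < n ∧ (∃ i : ℕ+, ed δ p i = n) ∧ ¬ (∃ i : ℕ+, ed δ p i = -n)

/-- Vertex n is labelled ∨ in x_λ: n > 0, −n occurs and n does not, or n = 0 and 0 occurs. -/
def IsDown (δ : ℤ) (p : Ptn) (n : ℚ) : Prop :=
  (0 < n ∧ (∃ i : ℕ+, ed δ p i = -n) ∧ ¬ (∃ i : ℕ+, ed δ p i = n)) ∨
  (n = 0 ∧ ∃ i : ℕ+, ed δ p i = 0)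

/-- q is obtained from p by adding one box, in row k. -/
def AddBoxAt (p q : Ptn) (k : ℕ+) : Prop :=
  q.toFun k = p.toFun k + 1 ∧ ∀ t : ℕ+, t ≠ k → q.toFun t = p.toFun t

/-- q is obtained from p by removing one box, from row l. -/
def RemoveBoxAt (p q : Ptn) (l : ℕ+) : Prop :=
  q.toFun l + 1 = p.toFun l ∧ ∀ t : ℕ+, t ≠ l → q.toFun t = p.toFun t

/-- A box is addable to p at position (k,i): λ_k + 1 = i and increasing the k-th part
yields a partition. -/
def AddableAt (p : Ptn) (k i : ℕ+) : Prop :=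
  p.toFun k + 1 = (i : ℕ) ∧ ∃ q : Ptn, AddBoxAt p q k

/-- A box is removable from p at position (l,j): λ_l = j and decreasing the l-th part
yields a partition. -/
def RemovableAt (p : Ptn) (l j : ℕ+) : Prop :=
  p.toFun l = (j : ℕ) ∧ ∃ q : Ptn, RemoveBoxAt p q l

/-- Edge of the Young graph: q is obtained from p by adding or removing a single box. -/
def YoungEdge (p q : Ptn) : Prop := (∃ k, AddBoxAt p q k) ∨ (∃ k, AddBoxAt q p k)

/-- d(i,j) = λ_i + λ_j − i − j + 1 if i ≤ j, and −λ^T_i − λ^T_j + i + j − 1 if i > j. -/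
noncomputable def dbox (p : Ptn) (i j : ℕ+) : ℤ :=
  if (i : ℕ) ≤ (j : ℕ) then
    (p.toFun i : ℤ) + (p.toFun j : ℤ) - ((i : ℕ) : ℤ) - ((j : ℕ) : ℤ) + 1
  else
    -(p.transpose i : ℤ) - (p.transpose j : ℤ) + ((i : ℕ) : ℤ) + ((j : ℕ) : ℤ) - 1

/-- Hook length h(i,j) = λ_i − j + λ^T_j − i + 1. -/
noncomputable def hook (p : Ptn) (i j : ℕ+) : ℤ :=
  (p.toFun i : ℤ) - ((j : ℕ) : ℤ) + (p.transpose j : ℤ) - ((i : ℕ) : ℤ) + 1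

/-- The King polynomial P_λ(u) = ∏_{(i,j)∈[λ]} (u − 1 + d(i,j)) / h(i,j) ∈ ℚ[u]. -/
noncomputable def king (p : Ptn) : Polynomial ℚ :=
  ∏ᶠ (q : ℕ+ × ℕ+) (_ : (q.2 : ℕ) ≤ p.toFun q.1),
    Polynomial.C ((hook p q.1 q.2 : ℚ))⁻¹ *
      (Polynomial.X + Polynomial.C ((dbox p q.1 q.2 : ℚ) - 1))

/-- (ρ_δ)_i = −δ/2 − i + 1. -/
def rhod (δ : ℤ) (i : ℕ+) : ℚ := -(δ : ℚ) / 2 - ((i : ℕ) : ℚ) + 1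

/-- A sequence is dominant if it is strictly decreasing. -/
def Dominant (x : ℕ+ → ℚ) : Prop := ∀ i j : ℕ+, i < j → x j < x i

/-- ε_i: the sequence with 1 in position i and 0 elsewhere. -/
def eps (i : ℕ+) : ℕ+ → ℚ := fun j => if j = i then 1 else 0

/-- Two sequences are adjacent if they differ by ±ε_i for some i. -/
def AdjacentSeq (x y : ℕ+ → ℚ) : Prop := ∃ i : ℕ+, y = x + eps i ∨ y = x - eps i

/-- x lies in the connected component of ρ_δ in the dominant part of the lattice graph:
x is dominant and is joined to ρ_δ by a finite chain of pairwise adjacent dominant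
sequences. -/
def InComponent (δ : ℤ) (x : ℕ+ → ℚ) : Prop :=
  Dominant x ∧ ∃ (r : ℕ) (c : ℕ → ℕ+ → ℚ),
    c 0 = rhod δ ∧ c r = x ∧ (∀ t ≤ r, Dominant (c t)) ∧
    ∀ t < r, AdjacentSeq (c t) (c (t + 1))

/-- λ ∈ A_δ: λ is joined to ∅ in the Young graph by a chain of δ-regular partitions. -/
def InAdelta (δ : ℤ) (p : Ptn) : Prop :=
  ∃ (r : ℕ) (c : ℕ → Ptn), c 0 = Ptn.empty ∧ c r = p ∧
    (∀ t ≤ r, degd δ (c t) = degd δ Ptn.empty) ∧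
    ∀ t < r, YoungEdge (c t) (c (t + 1))

/-! Put `n = e_j`; the hypothesis on `(i, j)` says `e_i = -n`. As `e` is strictly decreasing, the
entries of absolute value `< n` are exactly `e_k` with `j < k < i`. Their absolute values cover
every vertex below `n` other than the `∘`'s, each `×` twice and every other vertex once, so
`i - j - 1 = #{vertices below n} + #× - #∘`. The vertices of `L` below `n` number
`λ^T_j - j + 1 - ⌈δ/2⌉`, and `T = ⌈δ/2⌉ - 1` in both parities, hence
`#× - #∘ = i - λ^T_j - 1 + T`. -/

section General

variable {G : Type*} [AddCommGroup G] [LinearOrder G] [IsOrderedAddMonoid G]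

theorem card_image_abs_add_card_filter_neg_mem (S : Finset G) :
    (S.image abs).card + {w ∈ S | 0 < w ∧ -w ∈ S}.card = S.card := by
  set N := {w ∈ S | 0 ≤ w}
  set M := {w ∈ S | ¬ 0 ≤ w}.image Neg.neg
  have mem_M (w : G) : w ∈ M ↔ 0 < w ∧ -w ∈ S := by
    simp only [M, Finset.mem_image, Finset.mem_filter, not_le]
    exact ⟨by rintro ⟨v, ⟨hv, hv0⟩, rfl⟩; simpa using ⟨hv0, hv⟩,
      fun ⟨h0, h⟩ ↦ ⟨-w, ⟨h, neg_lt_zero.2 h0⟩, neg_neg w⟩⟩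
  have union : S.image abs = N ∪ M := by
    ext w
    simp only [N, Finset.mem_image, Finset.mem_union, Finset.mem_filter, mem_M]
    constructor
    · rintro ⟨v, hv, rfl⟩
      rcases le_or_gt 0 v with h | h
      · exact .inl (by rw [abs_of_nonneg h]; exact ⟨hv, h⟩)
      · exact .inr (by simpa [abs_of_neg h] using ⟨h, hv⟩)
    · rintro (⟨hw, h⟩ | ⟨h, hw⟩)
      · exact ⟨w, hw, abs_of_nonneg h⟩
      · exact ⟨-w, hw, by rw [abs_neg, abs_of_pos h]⟩
  have inter : {w ∈ S | 0 < w ∧ -w ∈ S} = N ∩ M := by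
    ext w
    simp only [N, Finset.mem_inter, Finset.mem_filter, mem_M]
    exact ⟨fun ⟨hw, h⟩ ↦ ⟨⟨hw, h.1.le⟩, h⟩, fun ⟨⟨hw, _⟩, h⟩ ↦ ⟨hw, h⟩⟩
  rw [union, inter, Finset.card_union_add_card_inter,
    Finset.card_image_of_injective _ neg_injective, Finset.card_filter_add_card_filter_not]

theorem abs_lt_iff_of_strictAnti {ι : Type*} [LinearOrder ι] {e : ι → G} (he : StrictAnti e)
    {i j : ι} (h : e i = -e j) (k : ι) : |e k| < e j ↔ j < k ∧ k < i := by
  rw [abs_lt, ← h, he.lt_iff_gt, he.lt_iff_gt, and_comm]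

end General

namespace Ptn

variable (p : Ptn)

theorem finite_setOf_le_toFun {c : ℕ} (hc : 0 < c) : {k : ℕ+ | c ≤ p.toFun k}.Finite := by
  obtain ⟨N, hN⟩ := p.finite_support'
  refine (Set.finite_Iio N).subset fun k hk ↦ Set.mem_Iio.2 (lt_of_not_ge fun h ↦ ?_)
  exact (hc.trans_le hk).ne' (hN k h)

theorem transpose_antitone : Antitone p.transpose := fun _ _ hab ↦
  Set.ncard_le_ncard (fun _ hk ↦ le_trans ((PNat.coe_le_coe _ _).2 hab) hk)
    (p.finite_setOf_le_toFun (PNat.pos _))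

end Ptn

section Entries

variable (δ : ℤ) (p : Ptn)

theorem strictAnti_ed : StrictAnti (ed δ p) := by
  intro a b hab
  have htr : (p.transpose b : ℚ) ≤ p.transpose a := by
    exact_mod_cast p.transpose_antitone hab.le
  have hlt : ((a : ℕ) : ℚ) < (b : ℕ) := by exact_mod_cast hab
  unfold ed
  linarith

theorem ed_add_half (k : ℕ+) :
    ed δ p k + (δ : ℚ) / 2 = ((p.transpose k - (k : ℕ) + 1 : ℤ) : ℚ) := by
  unfold ed
  push_cast
  ring

theorem abs_ed_mem_Lset (k : ℕ+) : |ed δ p k| ∈ Lset δ := by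
  refine ⟨abs_nonneg _, ?_⟩
  have hk := ed_add_half δ p k
  rcases abs_choice (ed δ p k) with h | h <;> rw [h]
  · exact ⟨_, hk⟩
  · refine ⟨δ - (p.transpose k - (k : ℕ) + 1), ?_⟩
    rw [Int.cast_sub, ← hk]
    ring

end Entries

section Vertices

/-- The vertices of `L` lying strictly to the left of `x`, as a finset. They are listed as
`z - δ/2` for integers `z`, which treats both parities of `δ` at once. -/
noncomputable def verticesLT (δ : ℤ) (x : ℚ) : Finset ℚ :=
  (Finset.Ico ⌈(δ : ℚ) / 2⌉ ⌈x + (δ : ℚ) / 2⌉).image fun z : ℤ ↦ (z : ℚ) - (δ : ℚ) / 2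

theorem mem_verticesLT {δ : ℤ} {x y : ℚ} : y ∈ verticesLT δ x ↔ y ∈ Lset δ ∧ y < x := by
  simp only [verticesLT, Lset, Finset.mem_image, Finset.mem_Ico, Int.ceil_le, Int.lt_ceil,
    Set.mem_ofPred_eq]
  constructor
  · rintro ⟨z, ⟨h0, hx⟩, rfl⟩
    exact ⟨⟨sub_nonneg.2 h0, z, sub_add_cancel _ _⟩, sub_lt_iff_lt_add.2 hx⟩
  · rintro ⟨⟨h0, z, hz⟩, hx⟩
    exact ⟨z, ⟨by linarith, by linarith⟩, by linarith⟩

theorem card_verticesLT (δ : ℤ) {x : ℚ} (hx : 0 ≤ x) :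
    ((verticesLT δ x).card : ℤ) = ⌈x + (δ : ℚ) / 2⌉ - ⌈(δ : ℚ) / 2⌉ := by
  have hinj : Function.Injective fun z : ℤ ↦ (z : ℚ) - (δ : ℚ) / 2 :=
    sub_left_injective.comp Int.cast_injective
  rw [verticesLT, Finset.card_image_of_injective _ hinj, Int.card_Ico_of_le]
  exact Int.ceil_mono (le_add_of_nonneg_left hx)

theorem card_verticesLT_ed {δ : ℤ} {p : Ptn} {k : ℕ+} (hk : 0 ≤ ed δ p k) :
    ((verticesLT δ (ed δ p k)).card : ℤ) = p.transpose k - (k : ℕ) + 1 - ⌈(δ : ℚ) / 2⌉ := by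
  rw [card_verticesLT δ hk, ed_add_half, Int.ceil_intCast]

end Vertices

section Counting

variable {δ : ℤ} {p : Ptn} {i j : ℕ+}

/-- The set of entries of `e_δ(λ)` strictly between positions `j` and `i`. When `e_i = -e_j` these
are the entries of absolute value less than `e_j`. -/
noncomputable def entriesBetween (δ : ℤ) (p : Ptn) (j i : ℕ+) : Finset ℚ :=
  (Finset.Ioo j i).image (ed δ p)

theorem card_entriesBetween (δ : ℤ) (p : Ptn) (j i : ℕ+) :
    (entriesBetween δ p j i).card = (i : ℕ) - j - 1 := by
  rw [entriesBetween, Finset.card_image_of_injective _ (strictAnti_ed δ p).injective,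
    PNat.card_Ioo]

theorem mem_entriesBetween (hneg : ed δ p i = -ed δ p j) {x : ℚ} :
    x ∈ entriesBetween δ p j i ↔ (∃ k, ed δ p k = x) ∧ |x| < ed δ p j := by
  simp only [entriesBetween, Finset.mem_image, Finset.mem_Ioo,
    ← abs_lt_iff_of_strictAnti (strictAnti_ed δ p) hneg]
  constructor
  · rintro ⟨k, hk, rfl⟩
    exact ⟨⟨k, rfl⟩, hk⟩
  · rintro ⟨⟨k, rfl⟩, hk⟩
    exact ⟨k, hk, rfl⟩

theorem setOf_isTimes_eq (hneg : ed δ p i = -ed δ p j) :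
    {n | n ∈ Lset δ ∧ n < ed δ p j ∧ IsTimes δ p n} =
      ↑{n ∈ entriesBetween δ p j i | 0 < n ∧ -n ∈ entriesBetween δ p j i} := by
  ext n
  simp only [IsTimes, Finset.coe_filter, Set.mem_ofPred_eq, mem_entriesBetween hneg, abs_neg]
  constructor
  · rintro ⟨-, hlt, hpos, hn, hn'⟩
    rw [abs_of_pos hpos]
    exact ⟨⟨hn, hlt⟩, hpos, hn', hlt⟩
  · rintro ⟨⟨⟨k, rfl⟩, hlt⟩, hpos, hn', -⟩
    have hL := abs_ed_mem_Lset δ p k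
    rw [abs_of_pos hpos] at hlt hL
    exact ⟨hL, hlt, hpos, ⟨k, rfl⟩, hn'⟩

theorem setOf_isCirc_eq (hneg : ed δ p i = -ed δ p j) :
    {n | n ∈ Lset δ ∧ n < ed δ p j ∧ IsCirc δ p n} =
      ↑(verticesLT δ (ed δ p j) \ (entriesBetween δ p j i).image abs) := by
  ext n
  simp only [IsCirc, Finset.coe_sdiff, Set.mem_sdiff, Finset.mem_coe, mem_verticesLT,
    Finset.mem_image, mem_entriesBetween hneg, Set.mem_ofPred_eq, ← and_assoc]
  refine and_congr_right fun hn ↦ ⟨?_, ?_⟩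
  · rintro h ⟨_, ⟨⟨k, rfl⟩, -⟩, hk⟩
    exact h k hk
  · rintro h k rfl
    exact h ⟨_, ⟨⟨k, rfl⟩, hn.2⟩, rfl⟩

theorem image_abs_entriesBetween_subset (hneg : ed δ p i = -ed δ p j) :
    (entriesBetween δ p j i).image abs ⊆ verticesLT δ (ed δ p j) := by
  simp only [Finset.image_subset_iff, mem_entriesBetween hneg, mem_verticesLT]
  rintro _ ⟨⟨k, rfl⟩, hk⟩
  exact ⟨abs_ed_mem_Lset δ p k, hk⟩

theorem ncard_isTimes_sub_ncard_isCirc (hij : j < i) (hneg : ed δ p i = -ed δ p j) :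
    ({n | n ∈ Lset δ ∧ n < ed δ p j ∧ IsTimes δ p n}.ncard : ℤ)
        - ({n | n ∈ Lset δ ∧ n < ed δ p j ∧ IsCirc δ p n}.ncard : ℤ)
      = (i : ℕ) - p.transpose j - 2 + ⌈(δ : ℚ) / 2⌉ := by
  have hpos : 0 ≤ ed δ p j := by linarith [strictAnti_ed δ p hij]
  have hij' : (j : ℕ) < i := hij
  have hentries := card_image_abs_add_card_filter_neg_mem (entriesBetween δ p j i)
  rw [card_entriesBetween] at hentries
  have hcirc := Finset.card_sdiff_add_card_eq_card (image_abs_entriesBetween_subset hneg)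
  have hvertices := card_verticesLT_ed hpos
  rw [setOf_isTimes_eq hneg, setOf_isCirc_eq hneg, Set.ncard_coe_finset, Set.ncard_coe_finset]
  omega

end Counting

/-- for a × of x_λ coming from the pair (i,j) (with j < i and
λ^T_i + λ^T_j − i − j + 2 = δ), the box (i,j) lies in [λ] iff
#(×'s left of n) − #(∘'s left of n) < T, where n = e_δ(λ)_j. -/
theorem stmt5 (δ m T : ℤ) (hmT : (δ = 2 * m ∧ T = m - 1) ∨ (δ = 2 * m + 1 ∧ T = m))
    (p : Ptn) (i j : ℕ+) (hij : j < i)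
    (hd : (p.transpose i : ℤ) + (p.transpose j : ℤ)
        - ((i : ℕ) : ℤ) - ((j : ℕ) : ℤ) + 2 = δ) :
    ((i : ℕ) ≤ p.transpose j) ↔
      (Set.ncard {n' : ℚ | n' ∈ Lset δ ∧ n' < ed δ p j ∧ IsTimes δ p n'} : ℤ)
        - (Set.ncard {n' : ℚ | n' ∈ Lset δ ∧ n' < ed δ p j ∧ IsCirc δ p n'} : ℤ) < T := by
  have hneg : ed δ p i = -ed δ p j := by
    have hdq : (p.transpose i : ℚ) + p.transpose j - (i : ℕ) - (j : ℕ) + 2 = δ := by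
      exact_mod_cast hd
    unfold ed
    linarith
  have hceil : ⌈(δ : ℚ) / 2⌉ = T + 1 := by
    rw [Int.ceil_eq_iff]
    rcases hmT with ⟨rfl, rfl⟩ | ⟨rfl, rfl⟩ <;> push_cast <;> constructor <;> linarith
  rw [ncard_isTimes_sub_ncard_isCirc hij hneg, hceil]
  omega
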